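/- arXiv:2002.09682 — 2 statements merged into one kernel-verified Lean document; each statement's English description precedes it below -/
import Mathlib

section
/- Factorisation composes strong reductions: suppose H factorises into H₀ and H₁, and both H₀ and H₁ strongly reduce to H'. Then H strongly reduces to H'; moreover, if r₀ is a strong reduction from H₀ to H' and r₁ is a strong reduction from H₁ to H', then r₁ ∘ r₀ is a strong reduction from H to H'. -/
namespace CKAH

open Classical

/-! ### Labelled posets and pomsets -/

/-- A labelled poset over alphabet `A`: a finite carrier with a partial order and labelling. -/
structure LPoset (A : Type) : Type 1 where
  carrier : Type
  [fin : Fintype carrier]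
  [ord : PartialOrder carrier]
  lab : carrier → A

attribute [instance] LPoset.fin LPoset.ord

/-- Isomorphism of labelled posets: an order isomorphism preserving labels. -/
def LPoset.Iso {A : Type} (u v : LPoset A) : Prop :=
  ∃ e : u.carrier ≃o v.carrier, ∀ x, v.lab (e x) = u.lab x

theorem LPoset.iso_equivalence (A : Type) : Equivalence (LPoset.Iso (A := A)) where
  refl u := ⟨OrderIso.refl _, fun _ => rfl⟩
  symm := by
    rintro u v ⟨e, he⟩
    exact ⟨e.symm, fun x => by rw [← he (e.symm x), OrderIso.apply_symm_apply]⟩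
  trans := by
    rintro u v w ⟨e, he⟩ ⟨f, hf⟩
    exact ⟨e.trans f, fun x => by rw [OrderIso.trans_apply, hf, he]⟩

instance pomSetoid (A : Type) : Setoid (LPoset A) := ⟨LPoset.Iso, LPoset.iso_equivalence A⟩

/-- A pomset is an isomorphism class of labelled posets. -/
def Pomset (A : Type) : Type 1 := Quotient (pomSetoid A)

/-- Sequential composition of labelled posets: disjoint union, everything on the left
below everything on the right (lexicographic sum order). -/
def LPoset.seqL {A : Type} (u v : LPoset A) : LPoset A where
  carrier := u.carrier ⊕ₗ v.carrier
  fin := inferInstanceAs (Fintype (u.carrier ⊕ v.carrier))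
  lab := fun x => Sum.elim u.lab v.lab (ofLex x)

/-- Parallel composition of labelled posets: disjoint union with no cross ordering. -/
def LPoset.parL {A : Type} (u v : LPoset A) : LPoset A where
  carrier := u.carrier ⊕ v.carrier
  lab := Sum.elim u.lab v.lab

def Pomset.seq {A : Type} : Pomset A → Pomset A → Pomset A :=
  Quotient.map₂ LPoset.seqL (by
    rintro u₁ u₂ ⟨e, he⟩ v₁ v₂ ⟨f, hf⟩
    refine ⟨(RelIso.sumLexCongr e f :
      (u₁.carrier ⊕ₗ v₁.carrier) ≃o (u₂.carrier ⊕ₗ v₂.carrier)), ?_⟩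
    rintro (x | x)
    · exact he x
    · exact hf x)

/-- Order isomorphism between disjoint-union orders, from component isomorphisms. -/
def sumOrderIso {α β γ δ : Type} [PartialOrder α] [PartialOrder β] [PartialOrder γ]
    [PartialOrder δ] (e : α ≃o γ) (f : β ≃o δ) : (α ⊕ β) ≃o (γ ⊕ δ) where
  toEquiv := Equiv.sumCongr e.toEquiv f.toEquiv
  map_rel_iff' := by
    rintro (x | x) (y | y) <;> simp [Sum.le_def, e.le_iff_le, f.le_iff_le]

def Pomset.par {A : Type} : Pomset A → Pomset A → Pomset A :=
  Quotient.map₂ LPoset.parL (by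
    rintro u₁ u₂ ⟨e, he⟩ v₁ v₂ ⟨f, hf⟩
    refine ⟨sumOrderIso e f, ?_⟩
    rintro (x | x)
    · exact he x
    · exact hf x)

def LPoset.emptyL (A : Type) : LPoset A := { carrier := Fin 0, lab := fun x => x.elim0 }

def LPoset.singleL {A : Type} (a : A) : LPoset A := { carrier := PUnit, lab := fun _ => a }

/-- The empty pomset `1`. -/
def Pomset.empty (A : Type) : Pomset A := ⟦LPoset.emptyL A⟧

/-- The single-letter pomset. -/
def Pomset.single {A : Type} (a : A) : Pomset A := ⟦LPoset.singleL a⟧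

/-- Subsumption on labelled posets: `u ⊑ v` iff there is a label-preserving
order-preserving bijection from the carrier of `v` to that of `u`. -/
def LPoset.subL {A : Type} (u v : LPoset A) : Prop :=
  ∃ h : v.carrier ≃ u.carrier,
    (∀ x, u.lab (h x) = v.lab x) ∧ ∀ x y : v.carrier, x ≤ y → h x ≤ h y

/-- Subsumption of pomsets: `Pomset.sub U V` means `U ⊑ V`. -/
def Pomset.sub {A : Type} : Pomset A → Pomset A → Prop :=
  Quotient.lift₂ LPoset.subL (by
    rintro u₁ v₁ u₂ v₂ ⟨e, he⟩ ⟨f, hf⟩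
    refine propext ⟨?_, ?_⟩
    · rintro ⟨h, hl, hm⟩
      refine ⟨(f.toEquiv.symm.trans h).trans e.toEquiv, fun x => ?_, fun x y hxy => ?_⟩
      · show u₂.lab (e (h (f.symm x))) = v₂.lab x
        rw [he, hl, ← hf (f.symm x), OrderIso.apply_symm_apply]
      · simp only [Equiv.trans_apply]
        exact e.le_iff_le.mpr (hm _ _ (f.symm.le_iff_le.mpr hxy))
    · rintro ⟨h, hl, hm⟩
      refine ⟨(f.toEquiv.trans h).trans e.toEquiv.symm, fun x => ?_, fun x y hxy => ?_⟩
      · show u₁.lab (e.symm (h (f x))) = v₁.lab x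
        rw [← he (e.symm (h (f x))), OrderIso.apply_symm_apply, hl, hf]
      · simp only [Equiv.trans_apply]
        exact e.symm.le_iff_le.mpr (hm _ _ (f.le_iff_le.mpr hxy)))

def LPoset.isWordL {A : Type} (u : LPoset A) : Prop := ∀ x y : u.carrier, x ≤ y ∨ y ≤ x

/-- A pomset is a word when it is totally ordered. -/
def Pomset.IsWord {A : Type} : Pomset A → Prop :=
  Quotient.lift LPoset.isWordL (by
    rintro u v ⟨e, -⟩
    refine propext ⟨fun h x y => ?_, fun h x y => ?_⟩
    · rcases h (e.symm x) (e.symm y) with h' | h'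
      · exact Or.inl (e.symm.le_iff_le.mp h')
      · exact Or.inr (e.symm.le_iff_le.mp h')
    · rcases h (e x) (e y) with h' | h'
      · exact Or.inl (e.le_iff_le.mp h')
      · exact Or.inr (e.le_iff_le.mp h'))

def LPoset.mapL {A B : Type} (f : A → B) (u : LPoset A) : LPoset B :=
  { carrier := u.carrier, lab := f ∘ u.lab }

/-- Relabelling of pomsets along a function on letters. -/
def Pomset.map {A B : Type} (f : A → B) : Pomset A → Pomset B :=
  Quotient.map (LPoset.mapL f)
    (by rintro u v ⟨e, he⟩; exact ⟨e, fun x => congrArg f (he x)⟩)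

def LPoset.overL {A : Type} (Γ : Set A) (u : LPoset A) : Prop := ∀ x, u.lab x ∈ Γ

/-- All labels of the pomset belong to `Γ`. -/
def Pomset.Over {A : Type} (Γ : Set A) : Pomset A → Prop :=
  Quotient.lift (LPoset.overL Γ) (by
    rintro u v ⟨e, he⟩
    refine propext ⟨fun h x => ?_, fun h x => ?_⟩
    · have h2 := he (e.symm x)
      rw [OrderIso.apply_symm_apply] at h2
      rw [h2]; exact h _
    · rw [← he x]; exact h _)

/-- Series-parallel pomsets. -/
inductive Pomset.IsSP {A : Type} : Pomset A → Prop
  | empty : Pomset.IsSP (Pomset.empty A)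
  | single (a : A) : Pomset.IsSP (Pomset.single a)
  | seq {U V : Pomset A} : Pomset.IsSP U → Pomset.IsSP V → Pomset.IsSP (Pomset.seq U V)
  | par {U V : Pomset A} : Pomset.IsSP U → Pomset.IsSP V → Pomset.IsSP (Pomset.par U V)

def SPset (A : Type) : Set (Pomset A) := {U | U.IsSP}

/-! ### Pomset contexts -/

/-- Contexts are pomsets over `Option A`, where `none` plays the role of `*`.
`uniqueStarL` says there is exactly one `*`-labelled node. -/
def LPoset.uniqueStarL {A : Type} (c : LPoset (Option A)) : Prop := ∃! x, c.lab x = none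

theorem LPoset.uniqueStarL_congr {A : Type} {u v : LPoset (Option A)}
    (e : u.carrier ≃o v.carrier) (he : ∀ x, v.lab (e x) = u.lab x) :
    u.uniqueStarL ↔ v.uniqueStarL := by
  constructor
  · rintro ⟨x, hx, hux⟩
    refine ⟨e x, show v.lab (e x) = none by rw [he]; exact hx, fun y hy => ?_⟩
    have h2 := he (e.symm y)
    rw [OrderIso.apply_symm_apply] at h2
    have h3 : e.symm y = x := hux _ (h2.symm.trans hy)
    rw [← h3, OrderIso.apply_symm_apply]
  · rintro ⟨x, hx, hvx⟩
    refine ⟨e.symm x, ?_, fun y hy => ?_⟩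
    · show u.lab (e.symm x) = none
      have h2 := he (e.symm x)
      rw [OrderIso.apply_symm_apply] at h2
      rw [← h2]; exact hx
    · have h3 : e y = x := hvx _ (show v.lab (e y) = none by rw [he]; exact hy)
      rw [← h3, OrderIso.symm_apply_apply]

/-- A pomset context: exactly one node labelled `*`. -/
def Pomset.IsCtx {A : Type} : Pomset (Option A) → Prop :=
  Quotient.lift LPoset.uniqueStarL
    (fun _ _ h => propext (LPoset.uniqueStarL_congr h.choose h.choose_spec))

/-- Series-parallel pomset contexts. -/
def Pomset.IsSPCtx {A : Type} (C : Pomset (Option A)) : Prop := C.IsCtx ∧ C.IsSP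

/-- Sequential (totally ordered) pomset contexts. -/
def Pomset.IsSeqCtx {A : Type} (C : Pomset (Option A)) : Prop := C.IsCtx ∧ C.IsWord

/-- The trivial context `*`. -/
def starCtx (A : Type) : Pomset (Option A) := Pomset.single (none : Option A)

theorem option_get_eq_get {α : Type} {o₁ o₂ : Option α} (h : o₁ = o₂) (h₁ : o₁.isSome)
    (h₂ : o₂.isSome) : o₁.get h₁ = o₂.get h₂ := by subst h; rfl

/-- The order of `C[U]`: the orders of `C` (restricted away from `*`) and of `U`, with a
point of `C` below (resp. above) all of `U` when it is below (resp. above) the unique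
`*`-node of `C`.  (For well-definedness of the order, the cross-relations are guarded by
the requirement that the star node is unique, which holds for every genuine context.) -/
def LPoset.insLe {A : Type} (c : LPoset (Option A)) (u : LPoset A) :
    ({x : c.carrier // c.lab x ≠ none} ⊕ u.carrier) →
    ({x : c.carrier // c.lab x ≠ none} ⊕ u.carrier) → Prop
  | Sum.inl x, Sum.inl y => x.val ≤ y.val
  | Sum.inr x, Sum.inr y => x ≤ y
  | Sum.inl x, Sum.inr _ => c.uniqueStarL ∧ ∃ s, c.lab s = none ∧ x.val ≤ s
  | Sum.inr _, Sum.inl y => c.uniqueStarL ∧ ∃ s, c.lab s = none ∧ s ≤ y.val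

/-- Insertion of a labelled poset `u` into the gap of a context `c`: the `*`-labelled
node is removed and `u` is put in its place, inheriting the order relations of `*`. -/
noncomputable def LPoset.insL {A : Type} (c : LPoset (Option A)) (u : LPoset A) :
    LPoset A where
  carrier := {x : c.carrier // c.lab x ≠ none} ⊕ u.carrier
  fin := by classical exact inferInstance
  ord :=
    { le := LPoset.insLe c u
      lt := fun p q => LPoset.insLe c u p q ∧ ¬ LPoset.insLe c u q p
      lt_iff_le_not_ge := fun _ _ => Iff.rfl
      le_refl := by rintro (x | x) <;> exact le_refl _
      le_trans := by
        rintro (x | x) (y | y) (z | z) h1 h2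
        · exact le_trans h1 h2
        · obtain ⟨hu, s, hs, hys⟩ := h2
          exact ⟨hu, s, hs, le_trans h1 hys⟩
        · obtain ⟨hu, s, hs, hxs⟩ := h1
          obtain ⟨-, t, ht, htz⟩ := h2
          obtain ⟨w, hw, huniq⟩ := hu
          have hst : s = t := (huniq s hs).trans (huniq t ht).symm
          exact le_trans (hst ▸ hxs) htz
        · exact h1
        · obtain ⟨hu, s, hs, hsy⟩ := h1
          exact ⟨hu, s, hs, le_trans hsy h2⟩
        · obtain ⟨hu, s, hs, hsy⟩ := h1
          obtain ⟨-, t, ht, hyt⟩ := h2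
          obtain ⟨w, hw, huniq⟩ := hu
          have hst : s = t := (huniq s hs).trans (huniq t ht).symm
          have hy : y.val = s := le_antisymm (hst.symm ▸ hyt) hsy
          exact absurd (hy.symm ▸ hs) y.prop
        · exact h2
        · exact le_trans h1 h2
      le_antisymm := by
        rintro (x | x) (y | y) h1 h2
        · exact congrArg Sum.inl (Subtype.ext (le_antisymm h1 h2))
        · obtain ⟨hu, s, hs, hxs⟩ := h1
          obtain ⟨-, t, ht, htx⟩ := h2
          obtain ⟨w, hw, huniq⟩ := hu
          have hst : s = t := (huniq s hs).trans (huniq t ht).symm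
          have hx : x.val = s := le_antisymm hxs (hst.symm ▸ htx)
          exact absurd (hx.symm ▸ hs) x.prop
        · obtain ⟨hu, s, hs, hsy⟩ := h1
          obtain ⟨-, t, ht, hyt⟩ := h2
          obtain ⟨w, hw, huniq⟩ := hu
          have hst : s = t := (huniq s hs).trans (huniq t ht).symm
          have hy : y.val = s := le_antisymm (hst.symm ▸ hyt) hsy
          exact absurd (hy.symm ▸ hs) y.prop
        · exact congrArg Sum.inr (le_antisymm h1 h2) }
  lab := Sum.elim (fun x => (c.lab x.val).get (Option.isSome_iff_ne_none.mpr x.prop)) u.lab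

/-- `Pomset.ins C U` is `C[U]`: plugging the pomset `U` into the gap of the context `C`. -/
noncomputable def Pomset.ins {A : Type} : Pomset (Option A) → Pomset A → Pomset A :=
  Quotient.map₂ LPoset.insL (by
    rintro c₁ c₂ ⟨e, he⟩ u₁ u₂ ⟨f, hf⟩
    have hstar : c₁.uniqueStarL ↔ c₂.uniqueStarL := LPoset.uniqueStarL_congr e he
    refine ⟨{ toEquiv := Equiv.sumCongr
                (e.toEquiv.subtypeEquiv fun x => by
                  rw [show c₂.lab (e.toEquiv x) = c₁.lab x from he x]) f.toEquiv
              map_rel_iff' := ?_ }, ?_⟩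
    · rintro (x | x) (y | y)
      · exact e.le_iff_le
      · show (c₂.uniqueStarL ∧ ∃ s, c₂.lab s = none ∧ (e x.val : c₂.carrier) ≤ s) ↔
             (c₁.uniqueStarL ∧ ∃ s, c₁.lab s = none ∧ x.val ≤ s)
        constructor
        · rintro ⟨hu, s, hs, hxs⟩
          refine ⟨hstar.mpr hu, e.symm s, ?_, ?_⟩
          · have h2 := he (e.symm s)
            rw [OrderIso.apply_symm_apply] at h2
            rw [← h2]; exact hs
          · exact e.le_iff_le.mp (by rw [OrderIso.apply_symm_apply]; exact hxs)
        · rintro ⟨hu, s, hs, hxs⟩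
          exact ⟨hstar.mp hu, e s, by rw [he]; exact hs, e.le_iff_le.mpr hxs⟩
      · show (c₂.uniqueStarL ∧ ∃ s, c₂.lab s = none ∧ s ≤ (e y.val : c₂.carrier)) ↔
             (c₁.uniqueStarL ∧ ∃ s, c₁.lab s = none ∧ s ≤ y.val)
        constructor
        · rintro ⟨hu, s, hs, hsy⟩
          refine ⟨hstar.mpr hu, e.symm s, ?_, ?_⟩
          · have h2 := he (e.symm s)
            rw [OrderIso.apply_symm_apply] at h2
            rw [← h2]; exact hs
          · exact e.le_iff_le.mp (by rw [OrderIso.apply_symm_apply]; exact hsy)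
        · rintro ⟨hu, s, hs, hsy⟩
          exact ⟨hstar.mp hu, e s, by rw [he]; exact hs, e.le_iff_le.mpr hsy⟩
      · exact f.le_iff_le
    · rintro (x | x)
      · exact option_get_eq_get (he x.val) _ _
      · exact hf x)

/-! ### Pomset languages -/

abbrev Lang (A : Type) := Set (Pomset A)

def Lang.seq {A : Type} (L K : Lang A) : Lang A :=
  {W | ∃ U ∈ L, ∃ V ∈ K, W = Pomset.seq U V}

def Lang.par {A : Type} (L K : Lang A) : Lang A :=
  {W | ∃ U ∈ L, ∃ V ∈ K, W = Pomset.par U V}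

def Lang.pow {A : Type} (L : Lang A) : ℕ → Lang A
  | 0 => {Pomset.empty A}
  | n + 1 => Lang.seq (Lang.pow L n) L

def Lang.star {A : Type} (L : Lang A) : Lang A := ⋃ n, L.pow n

/-- Application of a context to a language: `C[L] = {C[U] : U ∈ L}`. -/
def Ctx.img {A : Type} (C : Pomset (Option A)) (L : Lang A) : Lang A :=
  {W | ∃ U ∈ L, W = C.ins U}

/-! ### CKA terms and semantics -/

inductive Term (A : Type) : Type
  | zero : Term A
  | one : Term A
  | var : A → Term A
  | add : Term A → Term A → Term A
  | seq : Term A → Term A → Term A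
  | par : Term A → Term A → Term A
  | star : Term A → Term A

/-- Pomset language semantics of CKA terms. -/
def Term.lang {A : Type} : Term A → Lang A
  | .zero => ∅
  | .one => {Pomset.empty A}
  | .var a => {Pomset.single a}
  | .add e f => e.lang ∪ f.lang
  | .seq e f => Lang.seq e.lang f.lang
  | .par e f => Lang.par e.lang f.lang
  | .star e => Lang.star e.lang

/-- Sets of hypotheses: a hypothesis `e ≤ f` is the pair `(e, f)`. -/
abbrev HypSet (A : Type) := Set (Term A × Term A)

/-- The congruence `≡^H` on CKA terms generated by the CKA axioms and the hypotheses `H`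
(the constructor `hyp` encodes `e ≦^H f`, i.e. `e + f ≡^H f`, for `e ≤ f ∈ H`). -/
inductive CongH {A : Type} (H : HypSet A) : Term A → Term A → Prop
  | refl (e) : CongH H e e
  | symm {e f} : CongH H e f → CongH H f e
  | trans {e f g} : CongH H e f → CongH H f g → CongH H e g
  | addCong {e e' f f'} : CongH H e e' → CongH H f f' → CongH H (.add e f) (.add e' f')
  | seqCong {e e' f f'} : CongH H e e' → CongH H f f' → CongH H (.seq e f) (.seq e' f')
  | parCong {e e' f f'} : CongH H e e' → CongH H f f' → CongH H (.par e f) (.par e' f')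
  | starCong {e e'} : CongH H e e' → CongH H (.star e) (.star e')
  | addZero (e) : CongH H (.add e .zero) e
  | addIdem (e) : CongH H (.add e e) e
  | addComm (e f) : CongH H (.add e f) (.add f e)
  | addAssoc (e f g) : CongH H (.add e (.add f g)) (.add (.add e f) g)
  | seqAssoc (e f g) : CongH H (.seq e (.seq f g)) (.seq (.seq e f) g)
  | seqDistL (e f g) : CongH H (.seq e (.add f g)) (.add (.seq e f) (.seq e g))
  | seqDistR (e f g) : CongH H (.seq (.add e f) g) (.add (.seq e g) (.seq f g))
  | seqOneR (e) : CongH H (.seq e .one) e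
  | seqOneL (e) : CongH H (.seq .one e) e
  | seqZeroR (e) : CongH H (.seq e .zero) .zero
  | seqZeroL (e) : CongH H (.seq .zero e) .zero
  | parComm (e f) : CongH H (.par e f) (.par f e)
  | parOne (e) : CongH H (.par e .one) e
  | parZero (e) : CongH H (.par e .zero) .zero
  | parAssoc (e f g) : CongH H (.par e (.par f g)) (.par (.par e f) g)
  | parDist (e f g) : CongH H (.par e (.add f g)) (.add (.par e f) (.par e g))
  | starUnfoldL (e) : CongH H (.add .one (.seq e (.star e))) (.star e)
  | starUnfoldR (e) : CongH H (.add .one (.seq (.star e) e)) (.star e)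
  | lfpL {e f g} : CongH H (.add (.add e (.seq f g)) g) g →
      CongH H (.add (.seq (.star f) e) g) g
  | lfpR {e f g} : CongH H (.add (.add e (.seq f g)) f) f →
      CongH H (.add (.seq e (.star g)) f) f
  | hyp {e f} : (e, f) ∈ H → CongH H (.add e f) f

/-- `e ≦^H f`, the natural order `e + f ≡^H f`. -/
def LeH {A : Type} (H : HypSet A) (e f : Term A) : Prop := CongH H (.add e f) f

/-- The `H`-closure of a pomset language, as an inductive predicate: the smallest language
containing `L` such that for all `e ≤ f ∈ H` and series-parallel contexts `C`,
if `C[⟦f⟧] ⊆ cl` then `C[⟦e⟧] ⊆ cl`. -/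
inductive closure {A : Type} (H : HypSet A) (L : Lang A) : Pomset A → Prop
  | base {U} : U ∈ L → closure H L U
  | step {e f : Term A} (hef : (e, f) ∈ H) {C : Pomset (Option A)} (hC : C.IsSPCtx)
      (hf : ∀ V ∈ f.lang, closure H L (C.ins V)) {U} (hU : U ∈ e.lang) :
      closure H L (C.ins U)

/-- `cl H L` is the `H`-closure of `L`. -/
def cl {A : Type} (H : HypSet A) (L : Lang A) : Lang A := {U | closure H L U}

/-- The sequential closure: like `cl` but only sequential contexts are used. -/
inductive seqClosure {A : Type} (H : HypSet A) (L : Lang A) : Pomset A → Prop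
  | base {U} : U ∈ L → seqClosure H L U
  | step {e f : Term A} (hef : (e, f) ∈ H) {C : Pomset (Option A)} (hC : C.IsSeqCtx)
      (hf : ∀ V ∈ f.lang, seqClosure H L (C.ins V)) {U} (hU : U ∈ e.lang) :
      seqClosure H L (C.ins U)

def seqCl {A : Type} (H : HypSet A) (L : Lang A) : Lang A := {U | seqClosure H L U}

/-! ### Implication, completeness, reductions -/

/-- `H` implies `H'`: every hypothesis of `H'` is derivable from `H`. -/
def Implies {A : Type} (H H' : HypSet A) : Prop := ∀ p ∈ H', LeH H p.1 p.2

/-- `H` is complete: semantic equivalence implies axiomatic equivalence. -/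
def Complete {A : Type} (H : HypSet A) : Prop :=
  ∀ e f : Term A, cl H e.lang = cl H f.lang → CongH H e f

/-- A reduction from `H` to `H'` (presupposing that `H` implies `H'`). -/
structure IsReduction {A : Type} (H H' : HypSet A) (r : Term A → Term A) : Prop where
  implies : Implies H H'
  equiv : ∀ e, CongH H e (r e)
  reflect : ∀ e f : Term A, cl H e.lang = cl H f.lang → cl H' (r e).lang = cl H' (r f).lang

def Reduces {A : Type} (H H' : HypSet A) : Prop := ∃ r, IsReduction H H' r

/-- A strong reduction from `H` to `H'`. -/
structure IsStrongReduction {A : Type} (H H' : HypSet A) (r : Term A → Term A)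
    extends IsReduction H H' r : Prop where
  strong : ∀ e : Term A, cl H e.lang = cl H' (r e).lang

def StronglyReduces {A : Type} (H H' : HypSet A) : Prop := ∃ r, IsStrongReduction H H' r

/-- `H` factorises into `H₀` and `H₁`. -/
def Factorises {A : Type} (H H₀ H₁ : HypSet A) : Prop :=
  Implies H H₀ ∧ Implies H H₁ ∧ ∀ L : Lang A, L ⊆ SPset A → cl H L = cl H₁ (cl H₀ L)

/-! ### The exchange hypotheses and sp-subsumption -/

/-- The exchange hypotheses `(e∥f)·(g∥h) ≤ (e·g)∥(f·h)`. -/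
def exch (A : Type) : HypSet A :=
  {p | ∃ e f g h : Term A,
    p = (Term.seq (.par e f) (.par g h), Term.par (.seq e g) (.seq f h))}

/-- `⊑^sp`: the smallest precongruence on series-parallel pomsets satisfying the
exchange inequality. -/
inductive spSub {A : Type} : Pomset A → Pomset A → Prop
  | refl {U : Pomset A} : U.IsSP → spSub U U
  | trans {U V W} : spSub U V → spSub V W → spSub U W
  | seqCong {U V U' V'} : spSub U V → spSub U' V' → spSub (Pomset.seq U U') (Pomset.seq V V')
  | parCong {U V U' V'} : spSub U V → spSub U' V' → spSub (Pomset.par U U') (Pomset.par V V')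
  | exch {U V W X : Pomset A} : U.IsSP → V.IsSP → W.IsSP → X.IsSP →
      spSub (Pomset.seq (Pomset.par U V) (Pomset.par W X))
            (Pomset.par (Pomset.seq U W) (Pomset.seq V X))

/-! ### KA terms, grounded hypotheses, sequential reductions -/

/-- A term is a KA term when it contains no `∥`. -/
def Term.noPar {A : Type} : Term A → Prop
  | .zero => True
  | .one => True
  | .var _ => True
  | .add e f => e.noPar ∧ f.noPar
  | .seq e f => e.noPar ∧ f.noPar
  | .par _ _ => False
  | .star e => e.noPar

/-- A non-empty word. -/
def IsNonemptyWord {A : Type} (W : Pomset A) : Prop := W.IsWord ∧ W ≠ Pomset.empty A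

/-- A set of hypotheses is grounded when in each hypothesis `e ≤ f`, `e` is a KA term and
`⟦f⟧ = {W}` for a non-empty word `W`. -/
def Grounded {A : Type} (H : HypSet A) : Prop :=
  ∀ p ∈ H, p.1.noPar ∧ ∃ W : Pomset A, IsNonemptyWord W ∧ p.2.lang = {W}

/-- `≡_KA^H`: the congruence on terms generated by the axioms of `≡` not involving `∥`
together with the hypotheses of `H`. -/
inductive KACong {A : Type} (H : HypSet A) : Term A → Term A → Prop
  | refl (e) : KACong H e e
  | symm {e f} : KACong H e f → KACong H f e
  | trans {e f g} : KACong H e f → KACong H f g → KACong H e g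
  | addCong {e e' f f'} : KACong H e e' → KACong H f f' → KACong H (.add e f) (.add e' f')
  | seqCong {e e' f f'} : KACong H e e' → KACong H f f' → KACong H (.seq e f) (.seq e' f')
  | starCong {e e'} : KACong H e e' → KACong H (.star e) (.star e')
  | addZero (e) : KACong H (.add e .zero) e
  | addIdem (e) : KACong H (.add e e) e
  | addComm (e f) : KACong H (.add e f) (.add f e)
  | addAssoc (e f g) : KACong H (.add e (.add f g)) (.add (.add e f) g)
  | seqAssoc (e f g) : KACong H (.seq e (.seq f g)) (.seq (.seq e f) g)
  | seqDistL (e f g) : KACong H (.seq e (.add f g)) (.add (.seq e f) (.seq e g))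
  | seqDistR (e f g) : KACong H (.seq (.add e f) g) (.add (.seq e g) (.seq f g))
  | seqOneR (e) : KACong H (.seq e .one) e
  | seqOneL (e) : KACong H (.seq .one e) e
  | seqZeroR (e) : KACong H (.seq e .zero) .zero
  | seqZeroL (e) : KACong H (.seq .zero e) .zero
  | starUnfoldL (e) : KACong H (.add .one (.seq e (.star e))) (.star e)
  | starUnfoldR (e) : KACong H (.add .one (.seq (.star e) e)) (.star e)
  | lfpL {e f g} : KACong H (.add (.add e (.seq f g)) g) g →
      KACong H (.add (.seq (.star f) e) g) g
  | lfpR {e f g} : KACong H (.add (.add e (.seq f g)) f) f →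
      KACong H (.add (.seq e (.star g)) f) f
  | hyp {e f} : (e, f) ∈ H → KACong H (.add e f) f

/-- A sequential reduction from `H` to `H'`. -/
structure IsSeqReduction {A : Type} (H H' : HypSet A) (r : Term A → Term A) : Prop where
  implies : Implies H H'
  equiv : ∀ e : Term A, e.noPar → KACong H e (r e)
  closure_eq : ∀ e : Term A, e.noPar → seqCl H e.lang = seqCl H' (r e).lang

/-- Extension of a map on (KA) terms to all CKA terms, homomorphically on `∥`. -/
def parExt {A : Type} (r : Term A → Term A) : Term A → Term A
  | .par e f => .par (parExt r e) (parExt r f)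
  | e => r e

/-! ### Inductive characterisation of sp contexts -/

/-- The generators of series-parallel contexts (Lemma: `PC^sp` is the smallest such set). -/
inductive GenCtx {A : Type} : Pomset (Option A) → Prop
  | star : GenCtx (Pomset.single (none : Option A))
  | seqL {U : Pomset A} {C} : U.IsSP → GenCtx C → GenCtx (Pomset.seq (Pomset.map some U) C)
  | seqR {C} {V : Pomset A} : GenCtx C → V.IsSP → GenCtx (Pomset.seq C (Pomset.map some V))
  | par {U : Pomset A} {C} : U.IsSP → GenCtx C → GenCtx (Pomset.par (Pomset.map some U) C)

/-! ### Reification -/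

/-- Homomorphic extension of a letter map to terms. -/
def rTerm {A : Type} (r : A → Term A) : Term A → Term A
  | .zero => .zero
  | .one => .one
  | .var a => r a
  | .add e f => .add (rTerm r e) (rTerm r f)
  | .seq e f => .seq (rTerm r e) (rTerm r f)
  | .par e f => .par (rTerm r e) (rTerm r f)
  | .star e => .star (rTerm r e)

/-- All letters of a term lie in `Γ`. -/
def TermOver {A : Type} (Γ : Set A) : Term A → Prop
  | .zero => True
  | .one => True
  | .var a => a ∈ Γ
  | .add e f => TermOver Γ e ∧ TermOver Γ f
  | .seq e f => TermOver Γ e ∧ TermOver Γ f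
  | .par e f => TermOver Γ e ∧ TermOver Γ f
  | .star e => TermOver Γ e

/-- Extension of a letter map `r` to (series-parallel) pomsets, as a relation:
`rMap r U V` means `V ∈ r(U)`. -/
inductive rMap {A : Type} (r : A → Term A) : Pomset A → Pomset A → Prop
  | one : rMap r (Pomset.empty A) (Pomset.empty A)
  | var (a : A) {V} : V ∈ (r a).lang → rMap r (Pomset.single a) V
  | seq {U U' V V'} : rMap r U V → rMap r U' V' →
      rMap r (Pomset.seq U U') (Pomset.seq V V')
  | par {U U' V V'} : rMap r U V → rMap r U' V' →
      rMap r (Pomset.par U U') (Pomset.par V V')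

/-- Image of a language under (the pomset extension of) `r`. -/
def rImg {A : Type} (r : A → Term A) (L : Lang A) : Lang A := {V | ∃ U ∈ L, rMap r U V}

/-- Series-parallel pomsets over the subalphabet `Γ`. -/
def SPover {A : Type} (Γ : Set A) : Lang A := {U | U.IsSP ∧ U.Over Γ}

/-- `r : Σ → Term Γ` is a reification from `H` to `H'`. -/
structure IsReification {A : Type} (Γ : Set A) (H H' : HypSet A) (r : A → Term A) : Prop where
  toGamma : ∀ a : A, TermOver Γ (r a)
  equiv : ∀ a : A, CongH H (r a) (.var a)
  expansive : ∀ a ∈ Γ, LeH (∅ : HypSet A) (.var a) (r a)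
  preserves : ∀ L : Lang A, L ⊆ SPover Γ → cl H' L ⊆ SPover Γ
  hyps : ∀ p ∈ H, LeH H' (rTerm r p.1) (rTerm r p.2)

end CKAH

namespace CKAH

/-!
By factorisation and strength of `r₀`, `cl_H ⟦e⟧ = cl_{H₁} (cl_{H'} ⟦r₀ e⟧)`. Strength of `r₁`
says that `cl_{H₁} ⟦r₀ e⟧` is itself an `H'`-closure, hence `H'`-closed, so it already contains
`cl_{H'} ⟦r₀ e⟧`; this absorbs the inner closure without any appeal to soundness of `≡^{H₁}`.
Therefore `cl_H ⟦e⟧ = cl_{H₁} ⟦r₀ e⟧ = cl_{H'} ⟦r₁ (r₀ e)⟧`.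
-/

section SeriesParallel

variable {A : Type} {L K : Lang A}

theorem Lang.seq_subset_SPset (hL : L ⊆ SPset A) (hK : K ⊆ SPset A) : L.seq K ⊆ SPset A := by
  rintro _ ⟨U, hU, V, hV, rfl⟩
  exact .seq (hL hU) (hK hV)

theorem Lang.par_subset_SPset (hL : L ⊆ SPset A) (hK : K ⊆ SPset A) : L.par K ⊆ SPset A := by
  rintro _ ⟨U, hU, V, hV, rfl⟩
  exact .par (hL hU) (hK hV)

theorem Lang.pow_subset_SPset (hL : L ⊆ SPset A) (n : ℕ) : L.pow n ⊆ SPset A := by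
  induction n with
  | zero => exact Set.singleton_subset_iff.2 .empty
  | succ n ih => exact seq_subset_SPset ih hL

theorem Lang.star_subset_SPset (hL : L ⊆ SPset A) : L.star ⊆ SPset A :=
  Set.iUnion_subset (pow_subset_SPset hL)

theorem Term.lang_subset_SPset (e : Term A) : e.lang ⊆ SPset A := by
  induction e with
  | zero => exact Set.empty_subset _
  | one => exact Set.singleton_subset_iff.2 .empty
  | var a => exact Set.singleton_subset_iff.2 (.single a)
  | add _ _ ihe ihf => exact Set.union_subset ihe ihf
  | seq _ _ ihe ihf => exact Lang.seq_subset_SPset ihe ihf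
  | par _ _ ihe ihf => exact Lang.par_subset_SPset ihe ihf
  | star _ ih => exact Lang.star_subset_SPset ih

end SeriesParallel

section Closure

variable {A : Type} {H H' : HypSet A} {L M : Lang A}

theorem subset_cl : L ⊆ cl H L := fun _ => closure.base

theorem cl_subset_cl_of_subset_cl (h : L ⊆ cl H M) : cl H L ⊆ cl H M := by
  intro U hU
  induction hU with
  | base hU => exact h hU
  | step hef hC _ hU ih => exact closure.step hef hC ih hU

theorem cl_cl_eq_of_cl_eq_cl (h : cl H L = cl H' M) : cl H (cl H' L) = cl H L := by
  have absorb : cl H' L ⊆ cl H L := by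
    rw [h]
    exact cl_subset_cl_of_subset_cl (subset_cl.trans h.subset)
  exact (cl_subset_cl_of_subset_cl absorb).antisymm
    (cl_subset_cl_of_subset_cl (subset_cl.trans subset_cl))

end Closure

section Implication

variable {A : Type} {H H' H'' : HypSet A}

theorem CongH.of_implies (hH : Implies H H') {e f : Term A} (h : CongH H' e f) :
    CongH H e f := by
  induction h with
  | hyp hef => exact hH _ hef
  | refl => exact .refl _
  | symm _ ih => exact .symm ih
  | trans _ _ ih₁ ih₂ => exact .trans ih₁ ih₂
  | addCong _ _ ih₁ ih₂ => exact .addCong ih₁ ih₂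
  | seqCong _ _ ih₁ ih₂ => exact .seqCong ih₁ ih₂
  | parCong _ _ ih₁ ih₂ => exact .parCong ih₁ ih₂
  | starCong _ ih => exact .starCong ih
  | lfpL _ ih => exact .lfpL ih
  | lfpR _ ih => exact .lfpR ih
  | addZero => exact .addZero _
  | addIdem => exact .addIdem _
  | addComm => exact .addComm _ _
  | addAssoc => exact .addAssoc _ _ _
  | seqAssoc => exact .seqAssoc _ _ _
  | seqDistL => exact .seqDistL _ _ _
  | seqDistR => exact .seqDistR _ _ _
  | seqOneR => exact .seqOneR _
  | seqOneL => exact .seqOneL _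
  | seqZeroR => exact .seqZeroR _
  | seqZeroL => exact .seqZeroL _
  | parComm => exact .parComm _ _
  | parOne => exact .parOne _
  | parZero => exact .parZero _
  | parAssoc => exact .parAssoc _ _ _
  | parDist => exact .parDist _ _ _
  | starUnfoldL => exact .starUnfoldL _
  | starUnfoldR => exact .starUnfoldR _

theorem Implies.trans (h : Implies H H') (h' : Implies H' H'') : Implies H H'' :=
  fun p hp => (h' p hp).of_implies h

theorem IsStrongReduction.of_cl_eq {r : Term A → Term A} (implies : Implies H H')
    (equiv : ∀ e, CongH H e (r e)) (strong : ∀ e : Term A, cl H e.lang = cl H' (r e).lang) :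
    IsStrongReduction H H' r where
  implies := implies
  equiv := equiv
  reflect e f h := by rw [← strong, ← strong, h]
  strong := strong

end Implication

/-- **Factorisation composes strong reductions.** -/
theorem factorisation_strong_reduction (A : Type) (H H₀ H₁ H' : HypSet A)
    (r₀ r₁ : Term A → Term A) (hfac : Factorises H H₀ H₁)
    (h₀ : IsStrongReduction H₀ H' r₀) (h₁ : IsStrongReduction H₁ H' r₁) :
    StronglyReduces H H' ∧ IsStrongReduction H H' (r₁ ∘ r₀) := by
  obtain ⟨hH₀, hH₁, cl_factor⟩ := hfac
  have equiv (e : Term A) : CongH H e (r₁ (r₀ e)) :=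
    ((h₀.equiv e).of_implies hH₀).trans ((h₁.equiv (r₀ e)).of_implies hH₁)
  have strong (e : Term A) : cl H e.lang = cl H' (r₁ (r₀ e)).lang :=
    calc cl H e.lang = cl H₁ (cl H₀ e.lang) := cl_factor _ e.lang_subset_SPset
      _ = cl H₁ (cl H' (r₀ e).lang) := by rw [h₀.strong]
      _ = cl H₁ (r₀ e).lang := cl_cl_eq_of_cl_eq_cl (h₁.strong _)
      _ = cl H' (r₁ (r₀ e)).lang := h₁.strong _
  have comp : IsStrongReduction H H' (r₁ ∘ r₀) := .of_cl_eq (hH₀.trans h₀.implies) equiv strong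
  exact ⟨⟨_, comp⟩, comp⟩

end CKAH
end

section
/- Inductive characterisation of series-parallel contexts: PC^sp is the smallest set L of pomsets over Σ ∪ {*} such that * ∈ L; U·C ∈ L whenever U ∈ SP and C ∈ L; C·V ∈ L whenever C ∈ L and V ∈ SP; and U∥C ∈ L whenever U ∈ SP and C ∈ L. -/
namespace CKAH

/-! The multiset of labels of a pomset turns both compositions into sums, and a context is a pomset
in which `*` has multiplicity one. Hence in a composite context exactly one factor is a context,
while the other avoids `*`; a series-parallel pomset avoiding `*` is the relabelling of a
series-parallel pomset over the original alphabet. -/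

namespace Pomset

section Labels

variable {A B : Type}

/-- The multiset of labels (the Parikh image) of a pomset. The multiplicity of `none` in it
decides whether a pomset over `Option A` is a context. -/
def labels : Pomset A → Multiset A :=
  Quotient.lift (fun u => Finset.univ.val.map u.lab) (by
    rintro u v ⟨e, he⟩
    calc Finset.univ.val.map u.lab
        = Finset.univ.val.map (v.lab ∘ e) := by rw [← funext he]; rfl
      _ = (Finset.univ.val.map e).map v.lab := (Multiset.map_map ..).symm
      _ = Finset.univ.val.map v.lab := congrArg _ (Multiset.map_univ_val_equiv e.toEquiv))

@[simp]
theorem labels_single (a : A) : (single a).labels = {a} := rfl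

@[simp]
theorem labels_par (U V : Pomset A) : (U.par V).labels = U.labels + V.labels := by
  induction U, V using Quotient.inductionOn₂ with
  | _ u v =>
    change (Finset.univ.val.disjSum Finset.univ.val).map (Sum.elim u.lab v.lab) = _
    rw [Multiset.disjSum, Multiset.map_add, Multiset.map_map, Multiset.map_map]
    rfl

@[simp]
theorem labels_seq (U V : Pomset A) : (U.seq V).labels = U.labels + V.labels := by
  refine Eq.trans ?_ (labels_par U V)
  induction U, V using Quotient.inductionOn₂ with
  | _ u v => rfl

@[simp]
theorem labels_map (f : A → B) (U : Pomset A) : (U.map f).labels = U.labels.map f := by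
  induction U using Quotient.inductionOn with
  | _ u => exact (Multiset.map_map f u.lab _).symm

theorem isCtx_iff_count_labels [DecidableEq A] {C : Pomset (Option A)} :
    C.IsCtx ↔ C.labels.count none = 1 := by
  induction C using Quotient.inductionOn with
  | _ c =>
    change (∃! x, c.lab x = none) ↔ (Finset.univ.val.map c.lab).count none = 1
    simp only [Multiset.count_map, eq_comm (a := none)]
    exact Fintype.existsUnique_iff_card_one _

end Labels

section Compositions

variable {A B : Type}

theorem par_comm (U V : Pomset A) : U.par V = V.par U := by
  induction U, V using Quotient.inductionOn₂ with
  | _ u v =>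
    refine Quotient.sound ⟨OrderIso.sumComm u.carrier v.carrier, ?_⟩
    rintro (x | x) <;> rfl

theorem map_empty (f : A → B) : (empty A).map f = empty B :=
  Quotient.sound ⟨OrderIso.refl _, fun x => x.elim0⟩

theorem map_single (f : A → B) (a : A) : (single a).map f = single (f a) := rfl

theorem map_seq (f : A → B) (U V : Pomset A) : (U.seq V).map f = (U.map f).seq (V.map f) := by
  induction U, V using Quotient.inductionOn₂ with
  | _ u v =>
    refine Quotient.sound ⟨OrderIso.refl _, ?_⟩
    rintro (x | x) <;> rfl

theorem map_par (f : A → B) (U V : Pomset A) : (U.par V).map f = (U.map f).par (V.map f) := by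
  induction U, V using Quotient.inductionOn₂ with
  | _ u v =>
    refine Quotient.sound ⟨OrderIso.refl _, ?_⟩
    rintro (x | x) <;> rfl

theorem IsSP.map (f : A → B) {U : Pomset A} (hU : U.IsSP) : (U.map f).IsSP := by
  induction hU with
  | empty => exact map_empty f ▸ .empty
  | single a => exact .single (f a)
  | seq _ _ ihU ihV => exact map_seq f _ _ ▸ ihU.seq ihV
  | par _ _ ihU ihV => exact map_par f _ _ ▸ ihU.par ihV

theorem IsSP.exists_map_eq {f : A → B} {U : Pomset B} (hU : U.IsSP)
    (hf : ∀ b ∈ U.labels, b ∈ Set.range f) : ∃ V : Pomset A, V.IsSP ∧ V.map f = U := by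
  induction hU with
  | empty => exact ⟨_, .empty, map_empty f⟩
  | single b =>
    obtain ⟨a, rfl⟩ := hf b (Multiset.mem_singleton_self b)
    exact ⟨_, .single a, map_single f a⟩
  | seq _ _ ihU ihV =>
    simp only [labels_seq, Multiset.mem_add, or_imp, forall_and] at hf
    obtain ⟨U, hU, rfl⟩ := ihU hf.1
    obtain ⟨V, hV, rfl⟩ := ihV hf.2
    exact ⟨_, hU.seq hV, map_seq f U V⟩
  | par _ _ ihU ihV =>
    simp only [labels_par, Multiset.mem_add, or_imp, forall_and] at hf
    obtain ⟨U, hU, rfl⟩ := ihU hf.1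
    obtain ⟨V, hV, rfl⟩ := ihV hf.2
    exact ⟨_, hU.par hV, map_par f U V⟩

end Compositions

section Contexts

variable {A : Type}

theorem none_notMem_labels_map_some (U : Pomset A) : none ∉ (U.map some).labels := by
  simp

theorem IsSP.exists_map_some_eq {U : Pomset (Option A)} (hU : U.IsSP) (hnone : none ∉ U.labels) :
    ∃ V : Pomset A, V.IsSP ∧ V.map some = U :=
  hU.exists_map_eq fun _ ha => Option.ne_none_iff_exists.mp (ne_of_mem_of_not_mem ha hnone)

theorem not_isCtx_empty : ¬ (empty (Option A)).IsCtx := fun ⟨x, _⟩ => x.elim0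

theorem isCtx_single {a : Option A} : (single a).IsCtx ↔ a = none := by
  classical simp [isCtx_iff_count_labels, Multiset.count_singleton, eq_comm]

theorem isCtx_seq {U V : Pomset (Option A)} :
    (U.seq V).IsCtx ↔ none ∉ U.labels ∧ V.IsCtx ∨ U.IsCtx ∧ none ∉ V.labels := by
  classical
  simp only [isCtx_iff_count_labels, labels_seq, Multiset.count_add, Nat.add_eq_one_iff,
    Multiset.count_eq_zero]

theorem isCtx_par {U V : Pomset (Option A)} :
    (U.par V).IsCtx ↔ none ∉ U.labels ∧ V.IsCtx ∨ U.IsCtx ∧ none ∉ V.labels := by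
  classical
  simp only [isCtx_iff_count_labels, labels_par, Multiset.count_add, Nat.add_eq_one_iff,
    Multiset.count_eq_zero]

theorem IsSP.genCtx {C : Pomset (Option A)} (hC : C.IsSP) (hctx : C.IsCtx) : GenCtx C := by
  induction hC with
  | empty => exact absurd hctx not_isCtx_empty
  | single a => exact isCtx_single.mp hctx ▸ .star
  | seq hU hV ihU ihV =>
    rcases isCtx_seq.mp hctx with ⟨hnone, hctxV⟩ | ⟨hctxU, hnone⟩
    · obtain ⟨U', hU', rfl⟩ := hU.exists_map_some_eq hnone
      exact .seqL hU' (ihV hctxV)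
    · obtain ⟨V', hV', rfl⟩ := hV.exists_map_some_eq hnone
      exact .seqR (ihU hctxU) hV'
  | par hU hV ihU ihV =>
    rcases isCtx_par.mp hctx with ⟨hnone, hctxV⟩ | ⟨hctxU, hnone⟩
    · obtain ⟨U', hU', rfl⟩ := hU.exists_map_some_eq hnone
      exact .par hU' (ihV hctxV)
    · obtain ⟨V', hV', rfl⟩ := hV.exists_map_some_eq hnone
      exact par_comm _ _ ▸ .par hV' (ihU hctxU)

end Contexts

end Pomset

namespace GenCtx

variable {A : Type} {C : Pomset (Option A)}

theorem isCtx (h : GenCtx C) : C.IsCtx := by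
  induction h with
  | star => exact Pomset.isCtx_single.mpr rfl
  | seqL _ _ ih => exact Pomset.isCtx_seq.mpr (.inl ⟨Pomset.none_notMem_labels_map_some _, ih⟩)
  | seqR _ _ ih => exact Pomset.isCtx_seq.mpr (.inr ⟨ih, Pomset.none_notMem_labels_map_some _⟩)
  | par _ _ ih => exact Pomset.isCtx_par.mpr (.inl ⟨Pomset.none_notMem_labels_map_some _, ih⟩)

theorem isSP (h : GenCtx C) : C.IsSP := by
  induction h with
  | star => exact .single none
  | seqL hU _ ih => exact (hU.map some).seq ih
  | seqR _ hV ih => exact ih.seq (hV.map some)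
  | par hU _ ih => exact (hU.map some).par ih

end GenCtx

/-- **Inductive characterisation of series-parallel contexts**: `PC^sp` is the smallest
set containing `*` and closed under sequential/parallel composition with SP pomsets
(the inductive predicate `GenCtx`). -/
theorem spctx_inductive_characterisation (A : Type) (C : Pomset (Option A)) :
    C.IsSPCtx ↔ GenCtx C :=
  ⟨fun ⟨hctx, hsp⟩ => hsp.genCtx hctx, fun h => ⟨h.isCtx, h.isSP⟩⟩

end CKAH
end
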